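/- For every γ ∈ (1,2) and every N ≥ 1, τ(Â_γ) is symmetric positive definite and for every nonzero y ∈ ℝ^N one has (1/2)·yᵀ τ(Â_γ) y < yᵀ Â_γ y < (3/2)·yᵀ τ(Â_γ) y; consequently every eigenvalue of τ(Â_γ)^{−1} Â_γ lies strictly between 1/2 and 3/2. -/

import Mathlib

open Matrix

/-- The second-order coefficients `g_k^{(γ)}`. -/
noncomputable def gCoef (γ : ℝ) (k : ℤ) : ℝ :=
  (-1 : ℝ) ^ k * Real.Gamma (γ + 1) /
    (Real.Gamma (γ / 2 - k + 1) * Real.Gamma (γ / 2 + k + 1))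

/-- `Â_γ`: the symmetric Toeplitz matrix with `(i,j)` entry `g_{i-j}^{(γ)}`. -/
noncomputable def Ahat (γ : ℝ) (N : ℕ) : Matrix (Fin N) (Fin N) ℝ :=
  fun i j => gCoef γ ((i : ℤ) - (j : ℤ))

/-- τ part of the symmetric Toeplitz matrix with first column `t 0, …, t (N-1)`:
with 1-based indices `i, j ∈ {1,…,N}` (here `i.val + 1`, `j.val + 1`) and the
convention `t m = 0` for `m ≥ N`, the `(i,j)` entry is
`t |i-j| - t (i+j) - t (2(N+1)-i-j)`. -/
noncomputable def tauOf (N : ℕ) (t : ℕ → ℝ) : Matrix (Fin N) (Fin N) ℝ :=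
  fun i j =>
    (fun m => if m < N then t m else 0) ((i : ℤ) - (j : ℤ)).natAbs -
    (fun m => if m < N then t m else 0) (((i : ℕ) + 1) + ((j : ℕ) + 1)) -
    (fun m => if m < N then t m else 0) (2 * (N + 1) - ((i : ℕ) + 1) - ((j : ℕ) + 1))

/-- `τ(Â_γ)`. -/
noncomputable def tauAhat (γ : ℝ) (N : ℕ) : Matrix (Fin N) (Fin N) ℝ :=
  tauOf N (fun m => gCoef γ (m : ℤ))

/-- The tridiagonal matrix with `2` on the diagonal and `-1` on the sub/superdiagonals. -/
def triDiag (N : ℕ) : Matrix (Fin N) (Fin N) ℝ :=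
  fun i j =>
    if (i : ℤ) = (j : ℤ) then 2
    else if ((i : ℤ) - (j : ℤ)).natAbs = 1 then -1 else 0

/-- `Q_γ = I_N + (γ/24)·T_N`. -/
noncomputable def Qmat (γ : ℝ) (N : ℕ) : Matrix (Fin N) (Fin N) ℝ :=
  1 + (γ / 24) • triDiag N

/-- `P_γ = Q_γ · τ(Â_γ)`. -/
noncomputable def Pmat (γ : ℝ) (N : ℕ) : Matrix (Fin N) (Fin N) ℝ :=
  Qmat γ N * tauAhat γ N

/-!
Subtracting the truncated Hankel terms `H` from a symmetric Toeplitz matrix `T` gives `τ = T - H`,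
and the two bounds say that `T - (τ - T)` and `T + 3 (τ - T)` are positive definite. Every
`T + c (τ - T)` with `-1 ≤ c ≤ 3` is strictly diagonally dominant. Indeed the entries of `H` are
nonpositive, and away from the diagonal they are no smaller than those of `T`, at most one of the
two Hankel terms being nonzero. Hence `|T i j - c H i j| ≤ -(T i j + H i j)` for `i ≠ j`, and the
dominance reduces to the positivity of the row sums of `T + H`. Up to two nonpositive boundary
terms, such a row sum is `t 0` plus two partial sums of `∑ t (m + 1)`. For `t = g^{(γ)}` the
recursion of the Gamma function makes `g 0 + 2 ∑ g (m + 1)` telescope to a positive quantity.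
-/

section Matrix

variable {n : Type*} [Fintype n] [DecidableEq n]

open scoped ComplexOrder in
theorem posDef_of_sum_row_lt_diag {𝕜 : Type*} [RCLike 𝕜] {A : Matrix n n 𝕜} (hA : A.IsHermitian)
    (h : ∀ i, ∑ j ∈ Finset.univ.erase i, ‖A i j‖ < RCLike.re (A i i)) : A.PosDef := by
  refine hA.posDef_iff_eigenvalues_pos.2 fun k => ?_
  have hμ : Module.End.HasEigenvalue (toLin' A) (hA.eigenvalues k : 𝕜) := by
    rw [Module.End.hasEigenvalue_iff_mem_spectrum, spectrum_toLin', hA.spectrum_eq_image_range]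
    exact ⟨_, ⟨k, rfl⟩, rfl⟩
  obtain ⟨i, hi⟩ := eigenvalue_mem_ball hμ
  have hre : RCLike.re (A i i) - hA.eigenvalues k ≤ ‖A i i - hA.eigenvalues k‖ := by
    simpa using RCLike.re_le_norm (A i i - (hA.eigenvalues k : 𝕜))
  rw [mem_closedBall_iff_norm'] at hi
  linarith [h i]

theorem mulVec_eq_smul_mulVec_of_inv_mul_mulVec_eq_smul {R : Type*} [CommRing R]
    {P A : Matrix n n R} (hP : IsUnit P.det) {μ : R} {v : n → R} (h : (P⁻¹ * A) *ᵥ v = μ • v) :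
    A *ᵥ v = μ • P *ᵥ v := by
  rw [← mulVec_smul, ← h, mulVec_mulVec, mul_nonsing_inv_cancel_left _ _ hP]

theorem mem_Ioo_of_inv_mul_mulVec_eq_smul {P A : Matrix n n ℝ} (hP : P.PosDef) {a b : ℝ}
    {μ : ℝ} {v : n → ℝ} (hv : v ≠ 0) (ha : a * (v ⬝ᵥ P *ᵥ v) < v ⬝ᵥ A *ᵥ v)
    (hb : v ⬝ᵥ A *ᵥ v < b * (v ⬝ᵥ P *ᵥ v)) (h : (P⁻¹ * A) *ᵥ v = μ • v) : μ ∈ Set.Ioo a b := by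
  have hpos : 0 < v ⬝ᵥ P *ᵥ v := by simpa using hP.dotProduct_mulVec_pos hv
  rw [mulVec_eq_smul_mulVec_of_inv_mul_mulVec_eq_smul hP.det_pos.ne'.isUnit h, dotProduct_smul,
    smul_eq_mul] at ha hb
  exact ⟨lt_of_mul_lt_mul_right ha hpos.le, lt_of_mul_lt_mul_right hb hpos.le⟩

end Matrix

section Toeplitz

variable {α : Type*}

/-- The symmetric Toeplitz matrix of order `N` with first column `t 0, …, t (N - 1)`. -/
def symmToeplitz (N : ℕ) (t : ℕ → α) : Matrix (Fin N) (Fin N) α :=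
  of fun i j => t ((i : ℤ) - (j : ℤ)).natAbs

/-- The Hankel matrix subtracted from a symmetric Toeplitz matrix to form its `τ` part. In terms of
1-based indices its entries are `t (i + j) + t (2 (N + 1) - i - j)`; the sequence `t` is not
truncated here. -/
def hankelPart [Add α] (N : ℕ) (t : ℕ → α) : Matrix (Fin N) (Fin N) α :=
  of fun i j => t (i + j + 2) + t (2 * N - i - j)

theorem isSymm_symmToeplitz (N : ℕ) (t : ℕ → α) : (symmToeplitz N t).IsSymm := by
  ext i j
  rw [transpose_apply, symmToeplitz, of_apply, of_apply, ← Int.natAbs_neg, neg_sub]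

theorem isSymm_hankelPart [Add α] (N : ℕ) (t : ℕ → α) : (hankelPart N t).IsSymm := by
  ext i j
  rw [transpose_apply, hankelPart, of_apply, of_apply, add_comm (j : ℕ), Nat.sub_right_comm]

theorem symmToeplitz_indicator [Zero α] (N : ℕ) (t : ℕ → α) :
    symmToeplitz N ((Set.Iio N).indicator t) = symmToeplitz N t := by
  ext i j
  exact Set.indicator_of_mem (Set.mem_Iio.2 (by omega)) t

theorem tauOf_eq_symmToeplitz_sub_hankelPart (N : ℕ) (t : ℕ → ℝ) :
    tauOf N t = symmToeplitz N t - hankelPart N ((Set.Iio N).indicator t) := by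
  rw [← symmToeplitz_indicator]
  ext i j
  have hsum : (i : ℕ) + 1 + (j + 1) = i + j + 2 := by omega
  have hdiff : 2 * (N + 1) - ((i : ℕ) + 1) - (j + 1) = 2 * N - i - j := by omega
  simp only [tauOf, symmToeplitz, hankelPart, Matrix.sub_apply, of_apply, Set.indicator_apply,
    Set.mem_Iio, hsum, hdiff]
  ring

theorem sum_range_natAbs_sub [AddCommMonoid α] (f : ℕ → α) (i k : ℕ) :
    ∑ j ∈ Finset.range (i + 1 + k), f ((i : ℤ) - (j : ℤ)).natAbs =
      ∑ m ∈ Finset.range i, f (m + 1) + f 0 + ∑ m ∈ Finset.range k, f (m + 1) := by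
  rw [Finset.sum_range_add, Finset.sum_range_succ, ← Finset.sum_range_reflect _ i]
  congr 2
  · refine Finset.sum_congr rfl fun j hj => congrArg f ?_
    have := Finset.mem_range.1 hj
    omega
  · simp
  · funext j
    congr 1
    omega

-- In the 1-based row `i`, the numbers `i - j` for `j < i` and `i + j` for all `j` fill an initial
-- segment of the positive integers except for the gap `i`. The remaining terms do the same for the
-- mirrored row `N + 1 - i`.
theorem sum_symmToeplitz_add_hankelPart [AddCommMonoid α] (f : ℕ → α) {N : ℕ} (i : Fin N) :
    ∑ j, (symmToeplitz N f + hankelPart N f) i j + (f (i + 1) + f (N - i)) =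
      f 0 + ∑ m ∈ Finset.range (i + 1 + N), f (m + 1) +
        ∑ m ∈ Finset.range (N - i + N), f (m + 1) := by
  obtain ⟨i, hi⟩ := i
  obtain ⟨k, rfl⟩ : ∃ k, N = i + 1 + k := Nat.exists_eq_add_of_lt hi |>.imp fun k hk => by omega
  have hk : i + 1 + k - i = k + 1 := by omega
  have hmirror : ∑ j ∈ Finset.range (i + 1 + k), f (2 * (i + 1 + k) - i - j) =
      ∑ m ∈ Finset.range (i + 1 + k), f (k + 1 + m + 1) := by
    rw [← Finset.sum_range_reflect _ (i + 1 + k)]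
    refine Finset.sum_congr rfl fun j hj => congrArg f ?_
    have := Finset.mem_range.1 hj
    omega
  have hdirect : ∑ j ∈ Finset.range (i + 1 + k), f (i + j + 2) =
      ∑ m ∈ Finset.range (i + 1 + k), f (i + 1 + m + 1) :=
    Finset.sum_congr rfl fun j _ => congrArg f (by omega)
  simp only [symmToeplitz, hankelPart, Matrix.add_apply, of_apply, Finset.sum_add_distrib]
  rw [Fin.sum_univ_eq_sum_range fun j => f ((i : ℤ) - (j : ℤ)).natAbs,
    Fin.sum_univ_eq_sum_range fun j => f (i + j + 2),
    Fin.sum_univ_eq_sum_range fun j => f (2 * (i + 1 + k) - i - j),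
    sum_range_natAbs_sub, hmirror, hdirect, hk, Finset.sum_range_add _ (i + 1) (i + 1 + k),
    Finset.sum_range_add _ (k + 1) (i + 1 + k), Finset.sum_range_succ _ i,
    Finset.sum_range_succ _ k]
  abel

end Toeplitz

/-- The condition on a first column `t` under which the symmetric Toeplitz matrices it generates are
compared with their `τ` parts: the coefficients of positive index are nonpositive and increase, and
the symbol `t 0 + 2 ∑ t m cos (m θ)` has positive partial sums at `θ = 0`. -/
structure IsTauAdmissible (t : ℕ → ℝ) : Prop where
  succ_nonpos : ∀ m, t (m + 1) ≤ 0
  monotoneOn : MonotoneOn t (Set.Ici 1)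
  symbol_pos : ∀ M, 0 < t 0 + 2 * ∑ m ∈ Finset.range M, t (m + 1)

namespace IsTauAdmissible

variable {t : ℕ → ℝ} {N : ℕ} {c : ℝ}

theorem nonpos (ht : IsTauAdmissible t) {m : ℕ} (hm : 0 < m) : t m ≤ 0 := by
  obtain ⟨k, rfl⟩ := Nat.exists_eq_add_of_lt hm
  simpa using ht.succ_nonpos k

theorem indicator (ht : IsTauAdmissible t) (hN : 0 < N) :
    IsTauAdmissible ((Set.Iio N).indicator t) where
  succ_nonpos m := Set.indicator_apply_nonpos fun _ => ht.succ_nonpos m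
  monotoneOn := by
    intro m hm n hn hmn
    by_cases hnN : n < N
    · rw [Set.indicator_of_mem (Set.mem_Iio.2 (hmn.trans_lt hnN)),
        Set.indicator_of_mem (Set.mem_Iio.2 hnN)]
      exact ht.monotoneOn hm hn hmn
    · rw [Set.indicator_of_notMem (mt Set.mem_Iio.1 hnN)]
      exact Set.indicator_apply_nonpos fun _ => ht.nonpos hm
  symbol_pos M := by
    have hle : ∑ m ∈ Finset.range M, t (m + 1) ≤
        ∑ m ∈ Finset.range M, (Set.Iio N).indicator t (m + 1) :=
      Finset.sum_le_sum fun m _ =>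
        Set.le_indicator_apply (fun _ => le_rfl) fun _ => ht.succ_nonpos m
    rw [Set.indicator_of_mem (Set.mem_Iio.2 hN)]
    linarith [ht.symbol_pos M]

theorem hankelPart_nonpos (ht : IsTauAdmissible t) (i j : Fin N) : hankelPart N t i j ≤ 0 :=
  add_nonpos (ht.nonpos (by omega)) (ht.nonpos (by omega))

theorem symmToeplitz_le_hankelPart (ht : IsTauAdmissible t) (hsupp : ∀ m, N ≤ m → t m = 0)
    {i j : Fin N} (hij : i ≠ j) : symmToeplitz N t i j ≤ hankelPart N t i j := by
  have hpos : 1 ≤ ((i : ℤ) - (j : ℤ)).natAbs := by omega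
  simp only [symmToeplitz, hankelPart, of_apply]
  rcases lt_or_ge ((i : ℕ) + j + 2) N with h | h
  · rw [hsupp (2 * N - i - j) (by omega), add_zero]
    exact ht.monotoneOn hpos (show 1 ≤ _ by omega) (by omega)
  · rw [hsupp _ h, zero_add]
    exact ht.monotoneOn hpos (show 1 ≤ _ by omega) (by omega)

theorem sum_symmToeplitz_add_hankelPart_pos (ht : IsTauAdmissible t) (i : Fin N) :
    0 < ∑ j, (symmToeplitz N t + hankelPart N t) i j := by
  linarith [sum_symmToeplitz_add_hankelPart t i, ht.nonpos (Nat.succ_pos i),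
    ht.nonpos (Nat.sub_pos_of_lt i.2), ht.symbol_pos (i + 1 + N), ht.symbol_pos (N - i + N)]

theorem norm_symmToeplitz_sub_smul_hankelPart_le (ht : IsTauAdmissible t)
    (hsupp : ∀ m, N ≤ m → t m = 0) (hc : c ∈ Set.Icc (-1) 3) {i j : Fin N} (hij : i ≠ j) :
    ‖(symmToeplitz N t - c • hankelPart N t) i j‖ ≤ -(symmToeplitz N t + hankelPart N t) i j := by
  have hH := ht.hankelPart_nonpos i j
  have hTH := ht.symmToeplitz_le_hankelPart hsupp hij
  simp only [Matrix.sub_apply, Matrix.add_apply, Matrix.smul_apply, smul_eq_mul, Real.norm_eq_abs,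
    abs_le]
  constructor <;> nlinarith [hc.1, hc.2]

theorem sum_norm_erase_lt (ht : IsTauAdmissible t) (hsupp : ∀ m, N ≤ m → t m = 0)
    (hc : c ∈ Set.Icc (-1) 3) (i : Fin N) :
    ∑ j ∈ Finset.univ.erase i, ‖(symmToeplitz N t - c • hankelPart N t) i j‖ <
      (symmToeplitz N t - c • hankelPart N t) i i := by
  have hoff : ∑ j ∈ Finset.univ.erase i, ‖(symmToeplitz N t - c • hankelPart N t) i j‖ ≤
      -∑ j ∈ Finset.univ.erase i, (symmToeplitz N t + hankelPart N t) i j := by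
    rw [← Finset.sum_neg_distrib]
    exact Finset.sum_le_sum fun j hj =>
      ht.norm_symmToeplitz_sub_smul_hankelPart_le hsupp hc (Finset.ne_of_mem_erase hj).symm
  have hrow := ht.sum_symmToeplitz_add_hankelPart_pos i
  rw [← Finset.sum_erase_add _ _ (Finset.mem_univ i)] at hrow
  have hdiag := ht.hankelPart_nonpos i i
  simp only [Matrix.sub_apply, Matrix.add_apply, Matrix.smul_apply, smul_eq_mul] at hoff hrow ⊢
  nlinarith [hc.1]

theorem posDef_symmToeplitz_add_smul (ht : IsTauAdmissible t) (N : ℕ) (hc : c ∈ Set.Icc (-1) 3) :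
    (symmToeplitz N t + c • (tauOf N t - symmToeplitz N t)).PosDef := by
  set u := (Set.Iio N).indicator t
  have hsupp : ∀ m, N ≤ m → u m = 0 := fun m hm =>
    Set.indicator_of_notMem (Set.notMem_Iio.2 hm) t
  have heq : symmToeplitz N t + c • (tauOf N t - symmToeplitz N t) =
      symmToeplitz N u - c • hankelPart N u := by
    rw [tauOf_eq_symmToeplitz_sub_hankelPart, symmToeplitz_indicator, sub_sub_cancel_left, smul_neg,
      sub_eq_add_neg]
  rw [heq]
  refine posDef_of_sum_row_lt_diag (isHermitian_iff_isSymm.2 ?_) fun i => ?_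
  · exact (isSymm_symmToeplitz N u).sub ((isSymm_hankelPart N u).smul c)
  · exact (ht.indicator i.pos).sum_norm_erase_lt hsupp hc i

theorem posDef_tauOf (ht : IsTauAdmissible t) (N : ℕ) : (tauOf N t).PosDef := by
  simpa using ht.posDef_symmToeplitz_add_smul N (c := 1) (by norm_num)

theorem half_mul_tauOf_lt (ht : IsTauAdmissible t) {y : Fin N → ℝ} (hy : y ≠ 0) :
    1 / 2 * (y ⬝ᵥ tauOf N t *ᵥ y) < y ⬝ᵥ symmToeplitz N t *ᵥ y := by
  have h := (ht.posDef_symmToeplitz_add_smul N (c := -1) (by norm_num)).dotProduct_mulVec_pos hy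
  simp only [star_trivial, add_mulVec, smul_mulVec, sub_mulVec, dotProduct_add, dotProduct_smul,
    dotProduct_sub, smul_eq_mul] at h
  linarith

theorem lt_three_halves_mul_tauOf (ht : IsTauAdmissible t) {y : Fin N → ℝ} (hy : y ≠ 0) :
    y ⬝ᵥ symmToeplitz N t *ᵥ y < 3 / 2 * (y ⬝ᵥ tauOf N t *ᵥ y) := by
  have h := (ht.posDef_symmToeplitz_add_smul N (c := 3) (by norm_num)).dotProduct_mulVec_pos hy
  simp only [star_trivial, add_mulVec, smul_mulVec, sub_mulVec, dotProduct_add, dotProduct_smul,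
    dotProduct_sub, smul_eq_mul] at h
  linarith

end IsTauAdmissible

section Coefficients

variable {γ : ℝ}

-- At the poles of `Γ`, where `Real.Gamma` is `0`, this is still the identity for the entire
-- function `1 / Γ`, since the inverse of `0` is `0`.
theorem inv_realGamma_eq_mul_inv_realGamma_add_one (s : ℝ) :
    (Real.Gamma s)⁻¹ = s * (Real.Gamma (s + 1))⁻¹ := by
  have h := Complex.one_div_Gamma_eq_self_mul_one_div_Gamma_add_one (s : ℂ)
  rw [← Complex.ofReal_one, ← Complex.ofReal_add, Complex.Gamma_ofReal, Complex.Gamma_ofReal] at h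
  exact_mod_cast h

theorem gCoef_neg (γ : ℝ) (k : ℤ) : gCoef γ (-k) = gCoef γ k := by
  rw [gCoef, gCoef, _root_.zpow_neg, ← _root_.inv_zpow, inv_neg_one, Int.cast_neg, sub_neg_eq_add,
    ← sub_eq_add_neg, mul_comm (Real.Gamma (γ / 2 + k + 1))]

theorem gCoef_add_one (γ : ℝ) (k : ℤ) :
    (γ / 2 + k + 1) * gCoef γ (k + 1) = (k - γ / 2) * gCoef γ k := by
  have hlow := inv_realGamma_eq_mul_inv_realGamma_add_one (γ / 2 - k)
  have hhigh := inv_realGamma_eq_mul_inv_realGamma_add_one (γ / 2 + k + 1)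
  have hlow_arg : γ / 2 - (k + 1 : ℝ) + 1 = γ / 2 - k := by ring
  have hhigh_arg : γ / 2 + (k + 1 : ℝ) + 1 = γ / 2 + k + 1 + 1 := by ring
  rw [gCoef, gCoef, Int.cast_add, Int.cast_one, hlow_arg, hhigh_arg, div_eq_mul_inv _ (_ * _),
    div_eq_mul_inv _ (_ * _), mul_inv, mul_inv, hlow, hhigh,
    zpow_add_one₀ (neg_ne_zero.2 (one_ne_zero (α := ℝ)))]
  ring

theorem gCoef_zero_pos (hγ : -1 < γ) : 0 < gCoef γ 0 := by
  have hnum : 0 < Real.Gamma (γ + 1) := Real.Gamma_pos_of_pos (by linarith)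
  have hden : 0 < Real.Gamma (γ / 2 + 1) := Real.Gamma_pos_of_pos (by linarith)
  simp only [gCoef, zpow_zero, Int.cast_zero, sub_zero, add_zero, one_mul]
  positivity

theorem gCoef_succ_neg (hγ : γ ∈ Set.Ioo (0 : ℝ) 2) (k : ℕ) : gCoef γ (k + 1 : ℕ) < 0 := by
  obtain ⟨hγ0, hγ2⟩ := hγ
  induction k with
  | zero =>
    have hrec := gCoef_add_one γ 0
    have hzero := gCoef_zero_pos (show -1 < γ by linarith)
    norm_num at hrec ⊢
    nlinarith
  | succ k ih =>
    have hrec := gCoef_add_one γ (k + 1 : ℕ)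
    push_cast at hrec ih ⊢
    have hneg : (k + 1 - γ / 2) * gCoef γ (k + 1) < 0 :=
      mul_neg_of_pos_of_neg (by linarith [k.cast_nonneg (α := ℝ)]) ih
    exact neg_of_mul_neg_right (hrec ▸ hneg) (by positivity)

theorem monotoneOn_gCoef (hγ : γ ∈ Set.Ioo (0 : ℝ) 2) :
    MonotoneOn (fun k : ℕ => gCoef γ k) (Set.Ici 1) := by
  refine monotoneOn_nat_Ici_of_le_succ fun k hk => ?_
  obtain ⟨k, rfl⟩ := Nat.exists_eq_add_of_le' hk
  have hneg := gCoef_succ_neg hγ k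
  have hrec := gCoef_add_one γ (k + 1 : ℕ)
  have hk : (0 : ℝ) < γ / 2 + (k + 1) + 1 := by linarith [k.cast_nonneg (α := ℝ), hγ.1]
  push_cast at hneg hrec ⊢
  refine le_of_mul_le_mul_left ?_ hk
  nlinarith [hγ.1]

theorem mul_gCoef_zero_add_two_mul_sum (γ : ℝ) (M : ℕ) :
    γ * (gCoef γ 0 + 2 * ∑ m ∈ Finset.range M, gCoef γ (m + 1 : ℕ)) =
      -(2 * (M + 1) + γ) * gCoef γ (M + 1 : ℕ) := by
  induction M with
  | zero =>
    have hrec := gCoef_add_one γ 0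
    norm_num at hrec ⊢
    linarith
  | succ M ih =>
    have hrec := gCoef_add_one γ (M + 1 : ℕ)
    rw [Finset.sum_range_succ]
    push_cast at ih hrec ⊢
    linarith

theorem isTauAdmissible_gCoef (hγ : γ ∈ Set.Ioo (0 : ℝ) 2) :
    IsTauAdmissible fun k => gCoef γ k where
  succ_nonpos k := (gCoef_succ_neg hγ k).le
  monotoneOn := monotoneOn_gCoef hγ
  symbol_pos M := by
    have hfactor : -(2 * (M + 1) + γ) < 0 := by linarith [M.cast_nonneg (α := ℝ), hγ.1]
    refine pos_of_mul_pos_right ?_ hγ.1.le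
    exact (mul_pos_of_neg_of_neg hfactor (gCoef_succ_neg hγ M)).trans_eq
      (mul_gCoef_zero_add_two_mul_sum γ M).symm

theorem Ahat_eq_symmToeplitz (γ : ℝ) (N : ℕ) : Ahat γ N = symmToeplitz N fun k => gCoef γ k := by
  ext i j
  rw [Ahat, symmToeplitz, of_apply]
  rcases Int.natAbs_eq ((i : ℤ) - (j : ℤ)) with h | h
  · rw [← h]
  · rw [← gCoef_neg, ← neg_eq_iff_eq_neg.2 h]

end Coefficients

theorem stmt_12_general (γ : ℝ) (hγ : γ ∈ Set.Ioo (0 : ℝ) 2) (N : ℕ) :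
    (tauAhat γ N).IsSymm ∧ (tauAhat γ N).PosDef ∧
    (∀ y : Fin N → ℝ, y ≠ 0 →
      (1 / 2) * (y ⬝ᵥ tauAhat γ N *ᵥ y) < y ⬝ᵥ Ahat γ N *ᵥ y ∧
      y ⬝ᵥ Ahat γ N *ᵥ y < (3 / 2) * (y ⬝ᵥ tauAhat γ N *ᵥ y)) ∧
    (∀ (μ : ℝ) (v : Fin N → ℝ), v ≠ 0 →
      ((tauAhat γ N)⁻¹ * Ahat γ N) *ᵥ v = μ • v → 1 / 2 < μ ∧ μ < 3 / 2) := by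
  have hg := isTauAdmissible_gCoef hγ
  have hτ : (tauAhat γ N).PosDef := hg.posDef_tauOf N
  have hquad : ∀ y : Fin N → ℝ, y ≠ 0 →
      (1 / 2) * (y ⬝ᵥ tauAhat γ N *ᵥ y) < y ⬝ᵥ Ahat γ N *ᵥ y ∧
      y ⬝ᵥ Ahat γ N *ᵥ y < (3 / 2) * (y ⬝ᵥ tauAhat γ N *ᵥ y) := by
    intro y hy
    rw [Ahat_eq_symmToeplitz]
    exact ⟨hg.half_mul_tauOf_lt hy, hg.lt_three_halves_mul_tauOf hy⟩
  exact ⟨isHermitian_iff_isSymm.1 hτ.isHermitian, hτ, hquad, fun μ v hv hμ =>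
    mem_Ioo_of_inv_mul_mulVec_eq_smul hτ hv (hquad v hv).1 (hquad v hv).2 hμ⟩

theorem stmt_12 (γ : ℝ) (hγ : γ ∈ Set.Ioo (1 : ℝ) 2) (N : ℕ) (hN : 1 ≤ N) :
    (tauAhat γ N).IsSymm ∧ (tauAhat γ N).PosDef ∧
    (∀ y : Fin N → ℝ, y ≠ 0 →
      (1 / 2) * (y ⬝ᵥ tauAhat γ N *ᵥ y) < y ⬝ᵥ Ahat γ N *ᵥ y ∧
      y ⬝ᵥ Ahat γ N *ᵥ y < (3 / 2) * (y ⬝ᵥ tauAhat γ N *ᵥ y)) ∧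
    (∀ (μ : ℝ) (v : Fin N → ℝ), v ≠ 0 →
      ((tauAhat γ N)⁻¹ * Ahat γ N) *ᵥ v = μ • v → 1 / 2 < μ ∧ μ < 3 / 2) :=
  stmt_12_general γ (Set.Ioo_subset_Ioo_left zero_le_one hγ) N
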